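/- arXiv:1102.0264 — 2 statements merged into one kernel-verified Lean document; each statement's English description precedes it below -/
import Mathlib

section
/- Let M be a measurement cover on a finite set X with outcome set O = {1,...,l}, and let M be its incidence matrix. Then the rank of M as a matrix over the reals equals D := Σ_{U∈𝒰} (l−1)^{|U|}, where 𝒰 is the set of partial contexts of M. -/
/-!
The rows of the incidence matrix indexed by a context `C` span the space of functions of `t`
that depend only on `t|C`, of dimension at most `l ^ |C|`. Fix a base outcome `o₀`. For every
assignment `r`, the indicator of the assignments agreeing with `r` wherever `r ≠ o₀` depends only
on `t|U`, with `U = {x | r x ≠ o₀}`. These indicators are linearly independent, being triangular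
with respect to inclusion of the sets `U`, and there are `∑_{U ⊆ C} (l - 1) ^ |U| = l ^ |C|` of
them with `U ⊆ C`. By this dimension count they form a basis of the span of the rows indexed by
`C`, so those with `U` a partial context form a basis of the whole row space.
-/

open Finset

/-- Restriction of a section over `U` to a subset `V ⊆ U`. -/
def resSec {X O : Type} {U V : Finset X} (h : V ⊆ U) (s : {x // x ∈ U} → O) :
    {x // x ∈ V} → O :=
  fun v => s ⟨v.1, h v.2⟩

/-- Restriction of a global assignment `t : X → O` to the context `C`. -/
def resGlob {X O : Type} (t : X → O) (C : Finset X) : {x // x ∈ C} → O :=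
  fun c => t c.1

/-- Marginal of an `R`-valued distribution on sections over `U` to `V ⊆ U`:
`(d|V)(s) = ∑_{s' restricting to s} d(s')`. -/
def marg {X O R : Type} [DecidableEq X] [Fintype O] [DecidableEq O]
    [AddCommMonoid R] {U V : Finset X} (h : V ⊆ U)
    (d : ({x // x ∈ U} → O) → R) : ({x // x ∈ V} → O) → R :=
  fun s => ∑ s' ∈ univ.filter (fun s' => resSec h s' = s), d s'

/-- Marginal of a distribution on global assignments to the context `C`. -/
def globMarg {X O R : Type} [Fintype X] [DecidableEq X] [Fintype O] [DecidableEq O]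
    [AddCommMonoid R] (d : (X → O) → R) (C : Finset X) : ({x // x ∈ C} → O) → R :=
  fun s => ∑ t ∈ univ.filter (fun t => resGlob t C = s), d t

theorem linearIndependent_of_wellFounded_triangular {ι R M : Type*} [Ring R] [AddCommGroup M]
    [Module R M] {v : ι → M} (φ : ι → M →ₗ[R] R) {rel : ι → ι → Prop} (wf : WellFounded rel)
    (diag : ∀ i, IsRightRegular (φ i (v i)))
    (offDiag : ∀ i j, i ≠ j → φ j (v i) ≠ 0 → rel i j) : LinearIndependent R v := by
  rw [linearIndependent_iff']
  intro s c sum_eq_zero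
  by_contra! exists_ne
  obtain ⟨j, ⟨hjs, hcj⟩, hmin⟩ := wf.has_min {i | i ∈ s ∧ c i ≠ 0} exists_ne
  have others_vanish (i) (his : i ∈ s) (hij : i ≠ j) : φ j (c i • v i) = 0 := by
    by_contra hne
    rw [map_smul, smul_eq_mul] at hne
    exact hmin i ⟨his, left_ne_zero_of_mul hne⟩ (offDiag i j hij (right_ne_zero_of_mul hne))
  have diag_vanishes : c j * φ j (v j) = 0 := by
    rw [← smul_eq_mul, ← map_smul, ← sum_eq_single_of_mem j hjs others_vanish, ← map_sum,
      sum_eq_zero, map_zero]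
  exact hcj ((diag j).mul_right_eq_zero_iff.mp diag_vanishes)

section ContextFunctions

variable (R : Type*) {X O : Type}

/-- The space of functions of a global assignment `t` that depend only on `t|C`: the span of
the rows of the incidence matrix indexed by `C`. -/
def contextFunctions [Semiring R] (O : Type) (C : Finset X) : Submodule R ((X → O) → R) :=
  LinearMap.range (LinearMap.funLeft R R fun t : X → O => resGlob t C)

theorem contextFunctions_mono [Semiring R] {U C : Finset X} (h : U ⊆ C) :
    contextFunctions R O U ≤ contextFunctions R O C :=
  LinearMap.range_comp_le_range (LinearMap.funLeft R R (resSec h))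
    (LinearMap.funLeft R R fun t : X → O => resGlob t C)

theorem finrank_contextFunctions_le [Ring R] [StrongRankCondition R] [Fintype O] (C : Finset X) :
    Module.finrank R (contextFunctions R O C) ≤ Fintype.card O ^ #C := by
  classical
  calc Module.finrank R (contextFunctions R O C)
      ≤ Module.finrank R (({x // x ∈ C} → O) → R) := LinearMap.finrank_range_le _
    _ = Fintype.card O ^ #C := by simp

theorem span_range_indicator_resGlob [Semiring R] [Finite O] [DecidableEq O] (C : Finset X) :
    Submodule.span R (Set.range fun (s : {x // x ∈ C} → O) (t : X → O) =>
      if resGlob t C = s then (1 : R) else 0) = contextFunctions R O C := by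
  rw [contextFunctions, LinearMap.range_eq_map, ← (Pi.basisFun R _).span_eq, Submodule.map_span,
    ← Set.range_comp]
  congr 2
  ext s t
  simp [Pi.single_apply, LinearMap.funLeft]

end ContextFunctions

theorem sum_powerset_sub_one_pow_card {X : Type*} (C : Finset X) {n : ℕ} (hn : 1 ≤ n) :
    ∑ U ∈ C.powerset, (n - 1) ^ #U = n ^ #C := by
  simpa [Nat.sub_add_cancel hn] using sum_pow_mul_eq_add_pow (n - 1) 1 C

section SupportOff

variable {X O : Type} [Fintype X] [DecidableEq O]

/-- The support of an assignment relative to a base outcome `o₀`, which plays the role of zero. -/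
def supportOff (o₀ : O) (r : X → O) : Finset X :=
  univ.filter fun x => r x ≠ o₀

@[simp]
theorem mem_supportOff {o₀ : O} {r : X → O} {x : X} : x ∈ supportOff o₀ r ↔ r x ≠ o₀ := by
  simp [supportOff]

theorem supportOff_ssubset_of_forall_eq {o₀ : O} {r t : X → O} (hne : r ≠ t)
    (heq : ∀ x ∈ supportOff o₀ r, t x = r x) : supportOff o₀ r ⊂ supportOff o₀ t := by
  refine ⟨fun x hx => ?_, fun hsub => hne (funext fun x => ?_)⟩
  · rw [mem_supportOff, heq x hx]
    exact mem_supportOff.mp hx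
  · by_cases hx : x ∈ supportOff o₀ r
    · exact (heq x hx).symm
    · have hxt : x ∉ supportOff o₀ t := fun h => hx (hsub h)
      rw [mem_supportOff, not_not] at hx hxt
      exact hx.trans hxt.symm

variable [DecidableEq X] [Fintype O]

theorem card_filter_supportOff_eq (o₀ : O) (U : Finset X) :
    #{r : X → O | supportOff o₀ r = U} = (Fintype.card O - 1) ^ #U := by
  have eq_piFinset : ({r : X → O | supportOff o₀ r = U} : Finset (X → O)) =
      Fintype.piFinset fun x => if x ∈ U then univ.erase o₀ else {o₀} := by
    ext r
    simp only [mem_filter_univ, Fintype.mem_piFinset, Finset.ext_iff, mem_supportOff]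
    refine forall_congr' fun x => ?_
    by_cases hx : x ∈ U <;> simp [hx]
  rw [eq_piFinset, Fintype.card_piFinset]
  simp [apply_ite Finset.card, prod_ite_mem]

theorem card_subtype_supportOff_mem (o₀ : O) (𝒮 : Finset (Finset X)) :
    Fintype.card {r : X → O // supportOff o₀ r ∈ 𝒮} = ∑ U ∈ 𝒮, (Fintype.card O - 1) ^ #U := by
  rw [Fintype.card_subtype, card_eq_sum_card_fiberwise (f := supportOff o₀) (t := 𝒮)
    fun r hr => by simpa using hr]
  refine sum_congr rfl fun U hU => ?_
  rw [← card_filter_supportOff_eq o₀ U, filter_filter]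
  congr 1
  ext r
  simp only [mem_filter_univ, and_iff_right_iff_imp]
  rintro rfl
  exact hU

end SupportOff

section AgreementIndicator

variable (R : Type*) {X O : Type} [Fintype X] [DecidableEq O]

/-- The indicator of the global assignments that agree with `r` on its support relative to `o₀`.
Those whose support is a partial context form the basis of the row space used to compute its
dimension. -/
def agreementIndicator [Zero R] [One R] (o₀ : O) (r : X → O) : (X → O) → R :=
  fun t => if ∀ x ∈ supportOff o₀ r, t x = r x then 1 else 0

theorem linearIndependent_agreementIndicator [Ring R] (o₀ : O) :
    LinearIndependent R (agreementIndicator R o₀ : (X → O) → (X → O) → R) := by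
  refine linearIndependent_of_wellFounded_triangular (fun t => LinearMap.proj t)
    (InvImage.wf (supportOff o₀) wellFounded_lt) (fun r => ?_) fun r t hne hval => ?_
  · simpa [agreementIndicator] using isRegular_one.right
  · refine supportOff_ssubset_of_forall_eq hne ?_
    by_contra hdisagree
    exact hval (if_neg hdisagree)

theorem agreementIndicator_mem_contextFunctions [Semiring R] {o₀ : O} {r : X → O} {C : Finset X}
    (h : supportOff o₀ r ⊆ C) : agreementIndicator R o₀ r ∈ contextFunctions R O C := by
  refine contextFunctions_mono R h
    ⟨fun s => if ∀ x : {x // x ∈ supportOff o₀ r}, s x = r x then 1 else 0, ?_⟩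
  ext t
  exact if_congr Subtype.forall rfl rfl

theorem finrank_span_agreementIndicator [Fintype O] [Ring R] [StrongRankCondition R]
    (o₀ : O) (𝒮 : Finset (Finset X)) :
    Module.finrank R (Submodule.span R (agreementIndicator R o₀ '' {r | supportOff o₀ r ∈ 𝒮})) =
      ∑ U ∈ 𝒮, (Fintype.card O - 1) ^ #U := by
  classical
  have := nontrivial_of_invariantBasisNumber R
  have indep := (linearIndependent_agreementIndicator R o₀).comp
    (Subtype.val : {r : X → O // supportOff o₀ r ∈ 𝒮} → X → O) Subtype.val_injective
  rw [Set.image_eq_range, ← card_subtype_supportOff_mem o₀]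
  exact finrank_span_eq_card indep

theorem span_agreementIndicator_eq_contextFunctions {K : Type*} [DivisionRing K] [Finite O]
    (o₀ : O) (C : Finset X) :
    Submodule.span K (agreementIndicator K o₀ '' {r | supportOff o₀ r ⊆ C}) =
      contextFunctions K O C := by
  classical
  cases nonempty_fintype O
  refine Submodule.eq_of_le_of_finrank_le ?_ ?_
  · rw [Submodule.span_le, Set.image_subset_iff]
    exact fun r hr => agreementIndicator_mem_contextFunctions K hr
  · have card_pos : 1 ≤ Fintype.card O := Fintype.card_pos_iff.mpr ⟨o₀⟩
    have eq_powerset : {r : X → O | supportOff o₀ r ⊆ C} = {r | supportOff o₀ r ∈ C.powerset} := by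
      simp only [mem_powerset]
    rw [eq_powerset, finrank_span_agreementIndicator, sum_powerset_sub_one_pow_card C card_pos]
    exact finrank_contextFunctions_le K C

end AgreementIndicator

section Incidence

variable {X : Type}

/-- The incidence matrix over `R` of a family `MM` of contexts with outcome set `O`. -/
def incidenceMatrix (R : Type*) [Zero R] [One R] (O : Type) [DecidableEq O]
    (MM : Finset (Finset X)) :
    Matrix ((C : {C : Finset X // C ∈ MM}) × ({x // x ∈ C.1} → O)) (X → O) R :=
  Matrix.of fun p t => if resGlob t p.1.1 = p.2 then 1 else 0

theorem span_row_incidenceMatrix (R : Type*) [Semiring R] {O : Type} [Finite O] [DecidableEq O]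
    (MM : Finset (Finset X)) :
    Submodule.span R (Set.range (incidenceMatrix R O MM).row) =
      ⨆ C : {C : Finset X // C ∈ MM}, contextFunctions R O C.1 := by
  rw [Set.range_sigma_eq_iUnion_range, Submodule.span_iUnion]
  exact iSup_congr fun C => span_range_indicator_resGlob R C.1

variable [Fintype X] [DecidableEq X]

/-- The set `𝒰` of partial contexts of a family `MM` of contexts. -/
def partialContexts (MM : Finset (Finset X)) : Finset (Finset X) :=
  univ.filter fun U => ∃ C ∈ MM, U ⊆ C

theorem span_agreementIndicator_partialContexts {K : Type*} [DivisionRing K] {O : Type}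
    [Finite O] [DecidableEq O] (o₀ : O) (MM : Finset (Finset X)) :
    Submodule.span K (agreementIndicator K o₀ '' {r | supportOff o₀ r ∈ partialContexts MM}) =
      ⨆ C : {C : Finset X // C ∈ MM}, contextFunctions K O C.1 := by
  have iUnion_eq : {r | supportOff o₀ r ∈ partialContexts MM} =
      ⋃ C : {C : Finset X // C ∈ MM}, {r | supportOff o₀ r ⊆ C.1} := by
    ext r
    simp [partialContexts]
  rw [iUnion_eq, Set.image_iUnion, Submodule.span_iUnion]
  exact iSup_congr fun C => span_agreementIndicator_eq_contextFunctions o₀ C.1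

theorem incidence_matrix_rank_general (K : Type*) [Field K] {O : Type} [Fintype O]
    [DecidableEq O] [Nonempty O] (MM : Finset (Finset X)) :
    (incidenceMatrix K O MM).rank = ∑ U ∈ partialContexts MM, (Fintype.card O - 1) ^ #U := by
  obtain ⟨o₀⟩ := ‹Nonempty O›
  rw [Matrix.rank_eq_finrank_span_row, span_row_incidenceMatrix,
    ← span_agreementIndicator_partialContexts o₀, finrank_span_agreementIndicator]

end Incidence

/-- The rank over the reals of the incidence matrix of a measurement cover
(rows indexed by pairs `(C, s)` of a context and a section over it, columns by global
assignments, entry 1 iff `t|C = s`) equals `D = ∑_{U ∈ 𝒰} (l-1)^{|U|}`, where `𝒰` is the set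
of partial contexts. -/
theorem incidence_matrix_rank
    {X : Type} [Fintype X] [DecidableEq X] {l : ℕ} (hl : 1 ≤ l)
    (MM : Finset (Finset X))
    (hcov : ∀ x : X, ∃ C ∈ MM, x ∈ C)
    (hanti : ∀ C ∈ MM, ∀ C' ∈ MM, C ⊆ C' → C = C') :
    (Matrix.of fun (p : (C : {C : Finset X // C ∈ MM}) × ({x // x ∈ C.1} → Fin l))
        (t : X → Fin l) => if resGlob t p.1.1 = p.2 then (1 : ℝ) else 0).rank
      = ∑ U ∈ univ.filter (fun U : Finset X => ∃ C ∈ MM, U ⊆ C), (l - 1) ^ U.card := by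
  have : Nonempty (Fin l) := ⟨⟨0, hl⟩⟩
  simpa only [incidenceMatrix, partialContexts, Fintype.card_fin] using
    incidence_matrix_rank_general ℝ (O := Fin l) MM
end

section
/- Let e = (e_C)_{C∈M} be a compatible probabilistic model over a measurement cover M on a finite set X with finite outcome set O. Then e is strongly contextual (there is no global assignment s : X → O with s|C ∈ supp(e_C) for every C ∈ M) if and only if e is maximally contextual: for every λ with 0 < λ ≤ 1, there exist no compatible probabilistic models L and q over M such that L has a global section (an ℝ≥0-distribution d on O^X with d|C = L_C for all C) and e_C(s) = λ·L_C(s) + (1−λ)·q_C(s) for every C ∈ M and every section s over C. -/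
open Finset

/-!
If a global section `d` of `L` gives weight to a global assignment `t`, then `t` restricts into the
support of `L`, hence into that of any `e = λ·L + (1 - λ)·q` with `λ ≠ 0`. Conversely, if `t`
restricts into the support of `e`, then for small `λ` the point mass at `t`, scaled by `λ`, fits
below `e`; what remains of `e`, rescaled by `(1 - λ)⁻¹`, is again a compatible model because
normalization and compatibility are affine conditions.
-/

theorem exists_gt_forall_mem_lt {α : Type*} [LinearOrder α] [DenselyOrdered α] {s : Finset α}
    (hs : s.Nonempty) {a : α} (ha : ∀ x ∈ s, a < x) : ∃ b, a < b ∧ ∀ x ∈ s, b < x := by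
  simpa only [lt_min'_iff] using exists_between ((s.lt_min'_iff hs).2 ha)

theorem single_le_iff_le_apply {ι α : Type*} [DecidableEq ι] [AddZeroClass α] [Preorder α]
    [CanonicallyOrderedAdd α] {i : ι} {a : α} {f : ι → α} : Pi.single i a ≤ f ↔ a ≤ f i :=
  update_le_iff.trans (and_iff_left fun _ _ => zero_le)

section Contextuality

variable {X O R : Type} [DecidableEq X] [Fintype O] [DecidableEq O]

section Marginals

variable [AddCommMonoid R] {U V : Finset X}

theorem marg_add (h : V ⊆ U) (d d' : ({x // x ∈ U} → O) → R) :
    marg h (d + d') = marg h d + marg h d' :=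
  funext fun _ => sum_add_distrib

theorem marg_smul {S : Type*} [DistribSMul S R] (h : V ⊆ U) (c : S)
    (d : ({x // x ∈ U} → O) → R) : marg h (c • d) = c • marg h d :=
  funext fun _ => smul_sum.symm

variable [Fintype X]

theorem sum_globMarg (d : (X → O) → R) (C : Finset X) : ∑ s, globMarg d C s = ∑ t, d t :=
  sum_fiberwise univ (fun t => resGlob t C) d

theorem marg_globMarg (h : V ⊆ U) (d : (X → O) → R) :
    marg h (globMarg d U) = globMarg d V := by
  funext v
  calc marg h (globMarg d U) v
      = ∑ t with resGlob t V = v, ∑ _s ∈ {resGlob t U}, d t := by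
        refine sum_comm' fun s t => ?_
        simp only [mem_filter, mem_univ, true_and, mem_singleton]
        constructor <;> rintro ⟨rfl, rfl⟩ <;> exact ⟨rfl, rfl⟩
    _ = globMarg d V v := sum_congr rfl fun _ _ => sum_singleton _ _

theorem globMarg_single (t : X → O) (r : R) (C : Finset X) :
    globMarg (Pi.single t r) C = Pi.single (resGlob t C) r := by
  funext s
  rw [globMarg, sum_pi_single', Pi.single_apply]
  simp only [mem_filter, mem_univ, true_and, eq_comm]

theorem le_globMarg_resGlob [PartialOrder R] [CanonicallyOrderedAdd R]
    (d : (X → O) → R) (t : X → O) (C : Finset X) : d t ≤ globMarg d C (resGlob t C) :=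
  single_le_sum_of_canonicallyOrdered (mem_filter.2 ⟨mem_univ t, rfl⟩)

end Marginals

section Models

/-- Strong contextuality: no global assignment restricts into the support of `e` at every context
in `M`. -/
def IsStronglyContextual [Zero R] (M : Finset (Finset X))
    (e : (C : Finset X) → ({x // x ∈ C} → O) → R) : Prop :=
  ¬ ∃ t : X → O, ∀ C ∈ M, e C (resGlob t C) ≠ 0

variable [Semiring R] (M : Finset (Finset X)) (e L : (C : Finset X) → ({x // x ∈ C} → O) → R)

/-- `e` is a compatible probabilistic model with weights in `R` over the family of contexts `M`.
The values of `e` at subsets of `X` outside `M` are irrelevant. -/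
def IsCompatibleModel : Prop :=
  (∀ C ∈ M, ∑ s, e C s = 1) ∧
  ∀ C ∈ M, ∀ C' ∈ M,
    marg (show C ∩ C' ⊆ C from inter_subset_left) (e C) =
    marg (show C ∩ C' ⊆ C' from inter_subset_right) (e C')

/-- Some distribution on global assignments has the marginals prescribed by `L` at every context
in `M`; this is what makes `L` non-contextual. -/
def HasGlobalSection [Fintype X] : Prop :=
  ∃ d : (X → O) → R, (∑ t, d t = 1) ∧
    ∀ C ∈ M, ∀ s : {x // x ∈ C} → O, globMarg d C s = L C s

/-- `e` is a mixture of a non-contextual model with weight `lam` and a compatible model with weight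
`1 - lam`, so that its non-contextual fraction is at least `lam`. Subtraction being truncated, this
is a convex decomposition for `lam ≤ 1` only. -/
def HasNoncontextualPart [Fintype X] [Sub R] (lam : R) : Prop :=
  ∃ L q : (C : Finset X) → ({x // x ∈ C} → O) → R,
    IsCompatibleModel M L ∧ IsCompatibleModel M q ∧ HasGlobalSection M L ∧
    ∀ C ∈ M, ∀ s : {x // x ∈ C} → O, e C s = lam * L C s + (1 - lam) * q C s

/-- Maximal contextuality: the non-contextual fraction of `e` is zero. That the supremum vanishes is
expressed by excluding every positive weight. -/
def IsMaximallyContextual [Fintype X] [Sub R] [Preorder R] : Prop :=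
  ∀ lam : R, 0 < lam → lam ≤ 1 → ¬ HasNoncontextualPart M e lam

end Models

section Semiring

variable [Semiring R] {M : Finset (Finset X)} {e L q : (C : Finset X) → ({x // x ∈ C} → O) → R}

theorem HasGlobalSection.isCompatibleModel [Fintype X] (hL : HasGlobalSection M L) :
    IsCompatibleModel M L := by
  obtain ⟨d, hd, hdL⟩ := hL
  have eq_globMarg : ∀ C ∈ M, L C = globMarg d C := fun C hC => (funext (hdL C hC)).symm
  refine ⟨fun C hC => ?_, fun C hC C' hC' => ?_⟩
  · rw [eq_globMarg C hC, sum_globMarg, hd]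
  · rw [eq_globMarg C hC, eq_globMarg C' hC', marg_globMarg, marg_globMarg]

theorem hasGlobalSection_single [Fintype X] (M : Finset (Finset X)) (t : X → O) :
    HasGlobalSection M fun C => Pi.single (resGlob t C) (1 : R) :=
  ⟨Pi.single t 1, Fintype.sum_pi_single' t 1, fun C _ s => congrFun (globMarg_single t 1 C) s⟩

theorem IsCompatibleModel.of_convexCombination [IsLeftCancelAdd R] [IsLeftCancelMulZero R]
    {a b : R} (hab : a + b = 1) (hb : b ≠ 0)
    (he : IsCompatibleModel M e) (hL : IsCompatibleModel M L)
    (heq : ∀ C ∈ M, e C = a • L C + b • q C) : IsCompatibleModel M q := by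
  refine ⟨fun C hC => ?_, fun C hC C' hC' => ?_⟩
  · have sum_eq : a + b * ∑ s, q C s = a + b * 1 := calc
      a + b * ∑ s, q C s = ∑ s, e C s := by
        simp only [heq C hC, Pi.add_apply, Pi.smul_apply, smul_eq_mul, sum_add_distrib, ← mul_sum,
          hL.1 C hC, mul_one]
      _ = a + b * 1 := by rw [he.1 C hC, mul_one, hab]
    exact mul_left_cancel₀ hb (add_left_cancel sum_eq)
  · have marg_eq := he.2 C hC C' hC'
    rw [heq C hC, heq C' hC', marg_add, marg_add, marg_smul, marg_smul, marg_smul, marg_smul,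
      hL.2 C hC C' hC'] at marg_eq
    exact funext fun v => mul_left_cancel₀ hb (congrFun (add_left_cancel marg_eq) v)

variable [Fintype X] [PartialOrder R] [CanonicallyOrderedAdd R] [Nontrivial R]

theorem HasGlobalSection.not_isStronglyContextual (hL : HasGlobalSection M L) :
    ¬ IsStronglyContextual M L := by
  obtain ⟨d, hd, hdL⟩ := hL
  obtain ⟨t, -, ht⟩ := exists_ne_zero_of_sum_ne_zero (hd.trans_ne one_ne_zero)
  refine not_not_intro ⟨t, fun C hC hzero => ht ?_⟩
  exact nonpos_iff_eq_zero.1 ((le_globMarg_resGlob d t C).trans_eq ((hdL C hC _).trans hzero))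

theorem HasNoncontextualPart.not_isStronglyContextual [Sub R] [NoZeroDivisors R] {lam : R}
    (he : HasNoncontextualPart M e lam) (hlam : lam ≠ 0) : ¬ IsStronglyContextual M e := by
  obtain ⟨L, q, -, -, hL, heq⟩ := he
  obtain ⟨t, ht⟩ := not_not.1 hL.not_isStronglyContextual
  refine not_not_intro ⟨t, fun C hC hzero => mul_ne_zero hlam (ht C hC) ?_⟩
  rw [heq C hC] at hzero
  exact (add_eq_zero.1 hzero).1

end Semiring

section Semifield

variable [Semifield R] [LinearOrder R] [IsStrictOrderedRing R] [CanonicallyOrderedAdd R] [Sub R]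
  [OrderedSub R] [Fintype X] {M : Finset (Finset X)}
  {e L : (C : Finset X) → ({x // x ∈ C} → O) → R}

theorem IsCompatibleModel.hasNoncontextualPart_of_smul_le {lam : R} (he : IsCompatibleModel M e)
    (hL : HasGlobalSection M L) (hlam : lam < 1) (hle : ∀ C ∈ M, lam • L C ≤ e C) :
    HasNoncontextualPart M e lam := by
  have hne : 1 - lam ≠ 0 := (tsub_pos_of_lt hlam).ne'
  let q : (C : Finset X) → ({x // x ∈ C} → O) → R := fun C s => (e C s - lam * L C s) / (1 - lam)
  have heq : ∀ C ∈ M, ∀ s, e C s = lam * L C s + (1 - lam) * q C s := fun C hC s =>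
    (add_tsub_cancel_of_le (hle C hC s)).symm.trans
      (congrArg _ (mul_div_cancel₀ _ hne).symm)
  have hq : IsCompatibleModel M q :=
    he.of_convexCombination (add_tsub_cancel_of_le hlam.le) hne hL.isCompatibleModel
      fun C hC => funext (heq C hC)
  exact ⟨L, q, hL.isCompatibleModel, hq, hL, heq⟩

theorem IsCompatibleModel.exists_hasNoncontextualPart (he : IsCompatibleModel M e)
    (hs : ¬ IsStronglyContextual M e) :
    ∃ lam, 0 < lam ∧ lam < 1 ∧ HasNoncontextualPart M e lam := by
  obtain ⟨t, ht⟩ := not_not.1 hs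
  obtain ⟨lam, hpos, hlt⟩ := exists_gt_forall_mem_lt (a := 0)
    (insert_nonempty 1 (M.image fun C => e C (resGlob t C)))
    ((forall_mem_insert _ _ _).2
      ⟨zero_lt_one, forall_mem_image.2 fun C hC => pos_iff_ne_zero.2 (ht C hC)⟩)
  obtain ⟨hlt_one, hlt_e⟩ := (forall_mem_insert _ _ _).1 hlt
  refine ⟨lam, hpos, hlt_one,
    he.hasNoncontextualPart_of_smul_le (hasGlobalSection_single M t) hlt_one fun C hC => ?_⟩
  rw [← Pi.single_smul, single_le_iff_le_apply, smul_eq_mul, mul_one]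
  exact (hlt_e _ (mem_image_of_mem _ hC)).le

theorem strongly_contextual_iff_maximally_contextual_general (he : IsCompatibleModel M e) :
    IsStronglyContextual M e ↔ IsMaximallyContextual M e := by
  refine ⟨fun hs lam hpos _ hpart => hpart.not_isStronglyContextual hpos.ne' hs, fun hm => ?_⟩
  by_contra hs
  obtain ⟨lam, hpos, hlt, hpart⟩ := he.exists_hasNoncontextualPart hs
  exact hm lam hpos hlt.le hpart

end Semifield

end Contextuality

/-- A compatible probabilistic model `e` over a measurement cover is strongly
contextual (no global assignment restricts into the support of every context) if and only if it
is maximally contextual: for no `0 < λ ≤ 1` does `e` admit a convex decomposition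
`e = λ·L + (1-λ)·q` with `L` a compatible probabilistic model possessing a global section and
`q` a compatible probabilistic model. -/
theorem strongly_contextual_iff_maximally_contextual
    {X O : Type} [Fintype X] [DecidableEq X] [Fintype O] [DecidableEq O]
    (MM : Finset (Finset X))
    (hcov : ∀ x : X, ∃ C ∈ MM, x ∈ C)
    (hanti : ∀ C ∈ MM, ∀ C' ∈ MM, C ⊆ C' → C = C')
    (e : (C : Finset X) → ({x // x ∈ C} → O) → NNReal)
    (hdist : ∀ C ∈ MM, ∑ s, e C s = 1)
    (hcompat : ∀ C ∈ MM, ∀ C' ∈ MM,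
      marg (show C ∩ C' ⊆ C from inter_subset_left) (e C) =
      marg (show C ∩ C' ⊆ C' from inter_subset_right) (e C')) :
    (¬ ∃ s : X → O, ∀ C ∈ MM, e C (resGlob s C) ≠ 0) ↔
    (∀ lam : NNReal, 0 < lam → lam ≤ 1 →
      ¬ ∃ L q : (C : Finset X) → ({x // x ∈ C} → O) → NNReal,
        (∀ C ∈ MM, ∑ s, L C s = 1) ∧
        (∀ C ∈ MM, ∀ C' ∈ MM,
          marg (show C ∩ C' ⊆ C from inter_subset_left) (L C) =
          marg (show C ∩ C' ⊆ C' from inter_subset_right) (L C')) ∧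
        (∀ C ∈ MM, ∑ s, q C s = 1) ∧
        (∀ C ∈ MM, ∀ C' ∈ MM,
          marg (show C ∩ C' ⊆ C from inter_subset_left) (q C) =
          marg (show C ∩ C' ⊆ C' from inter_subset_right) (q C')) ∧
        (∃ d : (X → O) → NNReal, (∑ t, d t = 1) ∧
          ∀ C ∈ MM, ∀ s : {x // x ∈ C} → O, globMarg d C s = L C s) ∧
        (∀ C ∈ MM, ∀ s : {x // x ∈ C} → O,
          e C s = lam * L C s + (1 - lam) * q C s)) := by
  simpa only [IsStronglyContextual, IsMaximallyContextual, HasNoncontextualPart, IsCompatibleModel,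
    HasGlobalSection, and_assoc] using
    strongly_contextual_iff_maximally_contextual_general (M := MM) (e := e) ⟨hdist, hcompat⟩
end
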